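/- For every unconstrained coefficient vector β ∈ ℝ^D, the transformation H has average slope one over the interval [a, b]; that is, ∫_a^b H′(x) dx = b − a, equivalently (1/(b−a)) ∫_a^b H′(x) dx = 1. -/

import Mathlib

open MeasureTheory Finset

noncomputable section

/-- The cardinal cubic B-spline. -/
def cubicN (t : ℝ) : ℝ :=
  if 0 ≤ t ∧ t < 1 then t ^ 3 / 6
  else if 1 ≤ t ∧ t < 2 then (-3 * t ^ 3 + 12 * t ^ 2 - 12 * t + 4) / 6
  else if 2 ≤ t ∧ t < 3 then (3 * t ^ 3 - 24 * t ^ 2 + 60 * t - 44) / 6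
  else if 3 ≤ t ∧ t ≤ 4 then (4 - t) ^ 3 / 6
  else 0

/-- Equidistant knots `k_j = k0 + j·k`. -/
def knot (k0 k : ℝ) (j : ℤ) : ℝ := k0 + (j : ℝ) * k

/-- Cubic B-spline basis functions `B_j(x) = N((x − k_{j−3})/k)` for `j = 1, …, J`. -/
def Bspl (k0 k : ℝ) (j : ℕ) (x : ℝ) : ℝ := cubicN ((x - knot k0 k ((j : ℤ) - 3)) / k)

/-- The coefficients `γ_1, …, γ_J` (with `J = D + 7`, `m = D + 5`), defined from the
unconstrained vector `β ∈ ℝ^D`. -/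
def gam (D : ℕ) (k0 k : ℝ) (β : Fin D → ℝ) (j : ℕ) : ℝ :=
  if j = 1 then k0
  else if j = 2 ∨ j = 3 ∨ j = 4 ∨ j = D + 5 ∨ j = D + 6 ∨ j = D + 7 then Real.log k
  else if h : 5 ≤ j ∧ j ≤ D + 4 then
    β ⟨j - 5, by omega⟩ - Real.log ((∑ d, Real.exp (β d)) / ((D : ℝ) * k))
  else 0

/-- The transformation `H`: a cubic B-spline with coefficients
`γ_1 + ∑_{ℓ=2}^j exp(γ_ℓ)` on `[k_1, k_m]` (with `m = D + 5`), and the identity outside. -/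
def Hfun (D : ℕ) (k0 k : ℝ) (β : Fin D → ℝ) (x : ℝ) : ℝ :=
  if knot k0 k 1 ≤ x ∧ x ≤ knot k0 k ((D : ℤ) + 5) then
    ∑ j ∈ Finset.Icc 1 (D + 7),
      Bspl k0 k j x * (gam D k0 k β 1 + ∑ l ∈ Finset.Icc 2 j, Real.exp (gam D k0 k β l))
  else x

/-!
On `[k_1, k_m]` the transformation `H` is a `C²` spline, so `∫_a^b H′ = H b - H a`, and it suffices
that `H` fixes `a` and `b`. The value of a cubic spline at the knot `k_i` is
`(c_i + 4 c_{i+1} + c_{i+2}) / 6`, which equals `k_i` as soon as `c_j = k_{j-1}` for these three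
coefficients. Near `a` this holds because the first increments `exp γ_j` all equal `k`. The
normalization of `β` is a scaled softmax, so the `D` free increments add up to `D * k`; hence the
coefficients are back on the identity when the increments become `k` again, and the same holds
near `b`.
-/

lemma hasDerivAt_max_zero_pow (n : ℕ) (t : ℝ) :
    HasDerivAt (fun x : ℝ ↦ max x 0 ^ (n + 2)) ((n + 2) * max t 0 ^ (n + 1)) t := by
  refine hasDerivAt_of_hasDerivAt_of_ne' (x := 0)
    (g := fun x : ℝ ↦ ((n : ℝ) + 2) * max x 0 ^ (n + 1)) (fun x hx ↦ ?_) (by fun_prop)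
    (by fun_prop) t
  rcases lt_or_gt_of_ne hx with hneg | hpos
  · have hzero : (fun y : ℝ ↦ max y 0 ^ (n + 2)) =ᶠ[nhds x] fun _ ↦ 0 := by
      filter_upwards [gt_mem_nhds hneg] with y hy
      simp [max_eq_right hy.le]
    simpa [max_eq_right hneg.le] using (hasDerivAt_const x (0 : ℝ)).congr_of_eventuallyEq hzero
  · have hpow : (fun y : ℝ ↦ max y 0 ^ (n + 2)) =ᶠ[nhds x] fun y ↦ y ^ (n + 2) := by
      filter_upwards [lt_mem_nhds hpos] with y hy
      rw [max_eq_left hy.le]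
    simpa [max_eq_left hpos.le] using (hasDerivAt_pow (n + 2) x).congr_of_eventuallyEq hpow

lemma contDiff_max_zero_pow (n : ℕ) : ContDiff ℝ n (fun t : ℝ ↦ max t 0 ^ (n + 1)) := by
  induction n with
  | zero => exact contDiff_zero.2 (by fun_prop)
  | succ n ih =>
    have hderiv : deriv (fun t : ℝ ↦ max t 0 ^ (n + 2)) =
        fun t ↦ ((n : ℝ) + 2) * max t 0 ^ (n + 1) :=
      funext fun t ↦ (hasDerivAt_max_zero_pow n t).deriv
    push_cast
    refine contDiff_succ_iff_deriv.2
      ⟨fun t ↦ (hasDerivAt_max_zero_pow n t).differentiableAt, by simp, ?_⟩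
    rw [hderiv]
    exact contDiff_const.mul ih

/-- The fourth finite difference of the truncated power `max t 0 ^ 3 / 6`. -/
lemma cubicN_eq_sum_max_zero_pow (t : ℝ) :
    cubicN t = (max t 0 ^ 3 - 4 * max (t - 1) 0 ^ 3 + 6 * max (t - 2) 0 ^ 3
      - 4 * max (t - 3) 0 ^ 3 + max (t - 4) 0 ^ 3) / 6 := by
  unfold cubicN
  grind

lemma contDiff_cubicN : ContDiff ℝ 2 cubicN := by
  have hpow (c : ℝ) : ContDiff ℝ 2 fun t : ℝ ↦ max (t - c) 0 ^ 3 :=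
    (contDiff_max_zero_pow 2).comp (contDiff_id.sub contDiff_const)
  have hpow_zero : ContDiff ℝ 2 fun t : ℝ ↦ max t 0 ^ 3 := contDiff_max_zero_pow 2
  rw [funext cubicN_eq_sum_max_zero_pow]
  fun_prop

lemma cubicN_of_nonpos {t : ℝ} (ht : t ≤ 0) : cubicN t = 0 := by
  rw [cubicN_eq_sum_max_zero_pow]
  grind

lemma cubicN_of_four_le {t : ℝ} (ht : 4 ≤ t) : cubicN t = 0 := by
  rw [cubicN_eq_sum_max_zero_pow]
  grind

lemma cubicN_intCast (z : ℤ) :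
    cubicN z = if z = 1 ∨ z = 3 then 1 / 6 else if z = 2 then 2 / 3 else 0 := by
  rcases le_or_gt z 0 with hz | hz
  · rw [cubicN_of_nonpos (by exact_mod_cast hz), if_neg (by omega), if_neg (by omega)]
  rcases le_or_gt 4 z with hz' | hz'
  · rw [cubicN_of_four_le (by exact_mod_cast hz'), if_neg (by omega), if_neg (by omega)]
  interval_cases z <;> norm_num [cubicN]

lemma knot_strictMono (k0 : ℝ) {k : ℝ} (hk : 0 < k) : StrictMono (knot k0 k) := by
  intro i j hij
  unfold knot
  gcongr

lemma contDiff_Bspl (k0 k : ℝ) (j : ℕ) : ContDiff ℝ 2 (Bspl k0 k j) :=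
  contDiff_cubicN.comp ((contDiff_id.sub contDiff_const).div_const k)

lemma Bspl_knot (k0 : ℝ) {k : ℝ} (hk : k ≠ 0) (j : ℕ) (i : ℤ) :
    Bspl k0 k j (knot k0 k i) = cubicN ((i - j + 3 : ℤ) : ℝ) := by
  unfold Bspl knot
  congr 1
  push_cast
  field_simp
  ring

/-- The cubic spline `∑_{j=1}^J c_j B_j` on the equidistant knots `k0 + j·k`. The coefficients are
indexed by all of `ℕ`, but only `c 1, …, c J` matter. -/
def spline (k0 k : ℝ) (J : ℕ) (c : ℕ → ℝ) (x : ℝ) : ℝ :=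
  ∑ j ∈ Icc 1 J, Bspl k0 k j x * c j

lemma contDiff_spline (k0 k : ℝ) (J : ℕ) (c : ℕ → ℝ) : ContDiff ℝ 2 (spline k0 k J c) :=
  ContDiff.sum fun j _ ↦ (contDiff_Bspl k0 k j).mul contDiff_const

lemma spline_knot (k0 : ℝ) {k : ℝ} (hk : k ≠ 0) {J i : ℕ} (c : ℕ → ℝ) (hi : 1 ≤ i)
    (hiJ : i + 2 ≤ J) :
    spline k0 k J c (knot k0 k i) = (c i + 4 * c (i + 1) + c (i + 2)) / 6 := by
  have hsupport : Icc i (i + 2) ⊆ Icc 1 J := Icc_subset_Icc hi hiJ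
  have hvanish : ∀ j ∈ Icc 1 J, j ∉ Icc i (i + 2) → Bspl k0 k j (knot k0 k i) * c j = 0 := by
    intro j _ hj
    rw [mem_Icc] at hj
    rw [Bspl_knot k0 hk, cubicN_intCast, if_neg (by omega), if_neg (by omega), zero_mul]
  have hleft : Bspl k0 k i (knot k0 k i) = 1 / 6 := by
    rw [Bspl_knot k0 hk, cubicN_intCast, if_pos (by omega)]
  have hmid : Bspl k0 k (i + 1) (knot k0 k i) = 2 / 3 := by
    rw [Bspl_knot k0 hk, cubicN_intCast, if_neg (by omega), if_pos (by omega)]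
  have hright : Bspl k0 k (i + 2) (knot k0 k i) = 1 / 6 := by
    rw [Bspl_knot k0 hk, cubicN_intCast, if_pos (by omega)]
  rw [spline, ← sum_subset hsupport hvanish, sum_Icc_succ_top (by omega),
    sum_Icc_succ_top (by omega), Icc_self, sum_singleton, hleft, hmid, hright]
  ring

lemma spline_knot_eq_self (k0 : ℝ) {k : ℝ} (hk : k ≠ 0) {J i : ℕ} {c : ℕ → ℝ} (hi : 1 ≤ i)
    (hiJ : i + 2 ≤ J) (hc : ∀ j ∈ Icc i (i + 2), c j = knot k0 k (j - 1)) :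
    spline k0 k J c (knot k0 k i) = knot k0 k i := by
  rw [spline_knot k0 hk c hi hiJ, hc i (by simp), hc (i + 1) (by simp), hc (i + 2) (by simp)]
  unfold knot
  push_cast
  ring

section Coefficients

variable (D : ℕ) (k0 k : ℝ) (β : Fin D → ℝ)

/-- The spline coefficients `γ_1 + ∑_{ℓ=2}^j exp(γ_ℓ)` of `H`. -/
def coef (j : ℕ) : ℝ :=
  gam D k0 k β 1 + ∑ l ∈ Icc 2 j, Real.exp (gam D k0 k β l)

lemma coef_one : coef D k0 k β 1 = k0 := by
  simp [coef, gam]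

lemma coef_add {j : ℕ} (hj : 1 ≤ j) (n : ℕ) :
    coef D k0 k β (j + n) =
      coef D k0 k β j + ∑ i ∈ range n, Real.exp (gam D k0 k β (j + i + 1)) := by
  induction n with
  | zero => simp
  | succ n ih =>
    rw [sum_range_succ, ← add_assoc (coef D k0 k β j), ← ih, coef, coef, ← add_assoc,
      sum_Icc_succ_top (by omega), ← add_assoc]

variable {k}

lemma exp_gam_of_edge (hk : 0 < k) {j : ℕ} (hj : 2 ≤ j ∧ j ≤ 4 ∨ D + 5 ≤ j ∧ j ≤ D + 7) :
    Real.exp (gam D k0 k β j) = k := by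
  rw [gam, if_neg (by omega), if_pos (by omega), Real.exp_log hk]

lemma exp_gam_add_five (hk : 0 < k) (d : Fin D) :
    Real.exp (gam D k0 k β (d + 5)) =
      D * k * (Real.exp (β d) / ∑ d', Real.exp (β d')) := by
  have hD : (0 : ℝ) < D := by exact_mod_cast d.pos
  have hsum : 0 < ∑ d', Real.exp (β d') :=
    sum_pos (fun _ _ ↦ Real.exp_pos _) ⟨d, mem_univ d⟩
  rw [gam, if_neg (by omega), if_neg (by omega), dif_pos (by omega), Real.exp_sub,
    Real.exp_log (by positivity)]
  simp only [Nat.add_sub_cancel, Fin.eta]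
  field_simp

lemma sum_exp_gam_add_five (hk : 0 < k) :
    ∑ d : Fin D, Real.exp (gam D k0 k β (d + 5)) = D * k := by
  rcases D.eq_zero_or_pos with rfl | hD
  · simp
  have hsum : 0 < ∑ d, Real.exp (β d) :=
    sum_pos (fun _ _ ↦ Real.exp_pos _) ⟨⟨0, hD⟩, mem_univ _⟩
  simp_rw [exp_gam_add_five D k0 β hk]
  rw [← mul_sum, ← sum_div, div_self hsum.ne', mul_one]

lemma coef_eq_knot_left (hk : 0 < k) {j : ℕ} (hj : 1 ≤ j) (hj4 : j ≤ 4) :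
    coef D k0 k β j = knot k0 k (j - 1) := by
  obtain ⟨n, rfl⟩ := Nat.exists_eq_add_of_le hj
  have hedge : ∀ i ∈ range n, Real.exp (gam D k0 k β (1 + i + 1)) = k := fun i hi ↦
    exp_gam_of_edge D k0 β hk (by rw [mem_range] at hi; omega)
  rw [coef_add D k0 k β le_rfl, coef_one, sum_congr rfl hedge]
  simp [knot]

lemma coef_add_four_eq_knot (hk : 0 < k) : coef D k0 k β (D + 4) = knot k0 k (D + 3) := by
  have hfree : ∑ i ∈ range D, Real.exp (gam D k0 k β (4 + i + 1)) = D * k := by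
    rw [← sum_exp_gam_add_five D k0 β hk, sum_range]
    exact sum_congr rfl fun d _ ↦ by rw [add_right_comm, add_comm]
  rw [add_comm, coef_add D k0 k β (by norm_num), hfree,
    coef_eq_knot_left D k0 β hk (by norm_num) le_rfl]
  unfold knot
  push_cast
  ring

lemma coef_eq_knot_right (hk : 0 < k) {j : ℕ} (hj : D + 4 ≤ j) (hjJ : j ≤ D + 7) :
    coef D k0 k β j = knot k0 k (j - 1) := by
  obtain ⟨n, rfl⟩ := Nat.exists_eq_add_of_le hj
  have hedge : ∀ i ∈ range n, Real.exp (gam D k0 k β (D + 4 + i + 1)) = k := fun i hi ↦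
    exp_gam_of_edge D k0 β hk (by rw [mem_range] at hi; omega)
  rw [coef_add D k0 k β (by omega), coef_add_four_eq_knot D k0 β hk, sum_congr rfl hedge, sum_const,
    card_range, nsmul_eq_mul]
  unfold knot
  push_cast
  ring

end Coefficients

section Transformation

variable (D : ℕ) (k0 : ℝ) {k : ℝ} (β : Fin D → ℝ)

lemma Hfun_eqOn_spline (k : ℝ) :
    Set.EqOn (Hfun D k0 k β) (spline k0 k (D + 7) (coef D k0 k β))
      (Set.Icc (knot k0 k 1) (knot k0 k (D + 5))) :=
  fun _ hx ↦ if_pos hx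

lemma contDiffOn_Hfun (k : ℝ) :
    ContDiffOn ℝ 2 (Hfun D k0 k β) (Set.Icc (knot k0 k 1) (knot k0 k (D + 5))) :=
  (contDiff_spline k0 k (D + 7) (coef D k0 k β)).contDiffOn.congr (Hfun_eqOn_spline D k0 β k)

lemma Hfun_knot_eq_self (hk : 0 < k) {i : ℕ} (hi : 1 ≤ i ∧ i ≤ 2 ∨ D + 4 ≤ i ∧ i ≤ D + 5) :
    Hfun D k0 k β (knot k0 k i) = knot k0 k i := by
  have hmem : knot k0 k i ∈ Set.Icc (knot k0 k 1) (knot k0 k (D + 5)) :=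
    ⟨(knot_strictMono k0 hk).monotone (by omega), (knot_strictMono k0 hk).monotone (by omega)⟩
  have hcoef : ∀ j ∈ Icc i (i + 2), coef D k0 k β j = knot k0 k (j - 1) := by
    intro j hj
    rw [mem_Icc] at hj
    rcases hi with hleft | hright
    · exact coef_eq_knot_left D k0 β hk (by omega) (by omega)
    · exact coef_eq_knot_right D k0 β hk (by omega) (by omega)
  rw [Hfun_eqOn_spline D k0 β k hmem]
  exact spline_knot_eq_self k0 hk.ne' (by omega) (by omega) hcoef

end Transformation

/-- For every `β ∈ ℝ^D`, the transformation `H` has average slope one over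
`[a, b]` (`a = k_2`, `b = k_{m−1}`): `∫_a^b H′(x) dx = b − a`, equivalently
`(1/(b−a)) ∫_a^b H′(x) dx = 1`. -/
theorem H_average_slope_one (D : ℕ) (hD : 1 ≤ D) (k0 k : ℝ) (hk : 0 < k)
    (β : Fin D → ℝ) :
    (∫ x in (knot k0 k 2)..(knot k0 k ((D : ℤ) + 4)), deriv (Hfun D k0 k β) x
        = knot k0 k ((D : ℤ) + 4) - knot k0 k 2) ∧
    (1 / (knot k0 k ((D : ℤ) + 4) - knot k0 k 2)) *
        ∫ x in (knot k0 k 2)..(knot k0 k ((D : ℤ) + 4)), deriv (Hfun D k0 k β) x = 1 := by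
  have hlt : knot k0 k 2 < knot k0 k (D + 4) := knot_strictMono k0 hk (by omega)
  have hsubset : Set.Icc (knot k0 k 2) (knot k0 k (D + 4)) ⊆
      Set.Icc (knot k0 k 1) (knot k0 k (D + 5)) :=
    Set.Icc_subset_Icc ((knot_strictMono k0 hk).monotone (by omega))
      ((knot_strictMono k0 hk).monotone (by omega))
  have hcontDiff : ContDiffOn ℝ 1 (Hfun D k0 k β) (Set.Icc (knot k0 k 2) (knot k0 k (D + 4))) :=
    ((contDiffOn_Hfun D k0 β k).mono hsubset).of_le one_le_two
  have hleft : Hfun D k0 k β (knot k0 k 2) = knot k0 k 2 :=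
    Hfun_knot_eq_self D k0 β hk (i := 2) (by omega)
  have hright : Hfun D k0 k β (knot k0 k (D + 4)) = knot k0 k (D + 4) :=
    Hfun_knot_eq_self D k0 β hk (i := D + 4) (by omega)
  have hintegral := intervalIntegral.integral_deriv_of_contDiffOn_Icc hcontDiff hlt.le
  rw [hleft, hright] at hintegral
  exact ⟨hintegral, by rw [hintegral, one_div_mul_cancel (sub_pos.2 hlt).ne']⟩

end
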